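/- arXiv:1609.08067 — 2 statements merged into one kernel-verified Lean document; each statement's English description precedes it below -/
import Mathlib

section
/- Let G_1 and G_2 be two directed graphs on the vertex set [n]. Suppose that |⟨{i}⟩_{G_1}| = |⟨{i}⟩_{G_2}| for every i ∈ [n], and that |⟨{i,j}⟩_{G_1}| = |⟨{i,j}⟩_{G_2}| for every pair i ≠ j except possibly the ⌊n/2⌋ matching pairs {1,2}, {3,4}, {5,6}, …. Then |⟨A⟩_{G_1}| = |⟨A⟩_{G_2}| for every subset A ⊆ [n]. Consequently D(n) ≤ ⌈n/2⌉ + n(n−1)/2: there is a set of ⌈n/2⌉ + C(n,2) words whose G-weights suffice to reconstruct any metric based on a directed graph with n vertices. -/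
/-- The closure of a set of vertices `X` in the directed graph with edge relation `E`. -/
def gclosure {n : ℕ} (E : Fin n → Fin n → Prop) (X : Set (Fin n)) : Set (Fin n) :=
  {v | ∃ u ∈ X, Relation.ReflTransGen E u v}

theorem dom_iff_pair {n : ℕ} (E : Fin n → Fin n → Prop) (i j : Fin n) :
    Relation.ReflTransGen E i j ↔ (gclosure E {i, j}).ncard = (gclosure E {i}).ncard := by
  have hsub : gclosure E {i} ⊆ gclosure E {i, j} := by
    rintro v ⟨u, hu, h⟩
    exact ⟨u, Or.inl hu, h⟩
  constructor
  · intro hij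
    congr 1
    refine Set.Subset.antisymm ?_ hsub
    rintro v ⟨u, hu, h⟩
    rcases hu with rfl | hu
    · exact ⟨u, rfl, h⟩
    · have hu' : u = j := hu
      subst hu'
      exact ⟨i, rfl, hij.trans h⟩
  · intro h
    have heq := Set.eq_of_subset_of_ncard_le hsub h.le (Set.toFinite _)
    have hj : j ∈ gclosure E {i, j} := ⟨j, Or.inr rfl, Relation.ReflTransGen.refl⟩
    rw [← heq] at hj
    obtain ⟨u, hu, hr⟩ := hj
    have hu' : u = i := hu
    subst hu'
    exact hr

theorem dom_le {n : ℕ} (E₁ E₂ : Fin n → Fin n → Prop)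
    (hsingle : ∀ i : Fin n, (gclosure E₁ {i}).ncard = (gclosure E₂ {i}).ncard)
    (hpair : ∀ i j : Fin n, i ≠ j → i.val / 2 ≠ j.val / 2 →
      (gclosure E₁ {i, j}).ncard = (gclosure E₂ {i, j}).ncard)
    (i j : Fin n) (hij : Relation.ReflTransGen E₁ i j) : Relation.ReflTransGen E₂ i j := by
  have key : ∀ v : Fin n, i.val / 2 ≠ v.val / 2 →
      (Relation.ReflTransGen E₁ i v ↔ Relation.ReflTransGen E₂ i v) := by
    intro v hv
    rw [dom_iff_pair, dom_iff_pair, hsingle i, hpair i v (by rintro rfl; exact hv rfl) hv]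
  by_cases hm : i.val / 2 = j.val / 2
  · by_cases hne : i = j
    · subst hne; exact Relation.ReflTransGen.refl
    by_contra hcon
    have hsub : gclosure E₂ {i} ⊆ gclosure E₁ {i} := by
      rintro v ⟨u, hu, h⟩
      have hu' : u = i := hu
      subst hu'
      refine ⟨u, rfl, ?_⟩
      by_cases hv : u.val / 2 = v.val / 2
      · by_cases huv : u = v
        · subst huv; exact Relation.ReflTransGen.refl
        · have hvj : v = j := by
            ext
            have h1 : u.val ≠ v.val := fun h => huv (Fin.ext h)
            have h2 : u.val ≠ j.val := fun h => hne (Fin.ext h)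
            omega
          rw [hvj] at h
          exact absurd h hcon
      · exact (key v hv).2 h
    have heq := Set.eq_of_subset_of_ncard_le hsub (hsingle i).le (Set.toFinite _)
    have hj : j ∈ gclosure E₁ {i} := ⟨i, rfl, hij⟩
    rw [← heq] at hj
    obtain ⟨u, hu, h⟩ := hj
    have hu' : u = i := hu
    subst hu'
    exact hcon h
  · exact (key j hm).1 hij

theorem closure_card_eq {n : ℕ} (E₁ E₂ : Fin n → Fin n → Prop)
    (hsingle : ∀ i : Fin n, (gclosure E₁ {i}).ncard = (gclosure E₂ {i}).ncard)
    (hpair : ∀ i j : Fin n, i ≠ j → i.val / 2 ≠ j.val / 2 →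
      (gclosure E₁ {i, j}).ncard = (gclosure E₂ {i, j}).ncard)
    (A : Set (Fin n)) : (gclosure E₁ A).ncard = (gclosure E₂ A).ncard := by
  congr 1
  ext v
  constructor
  · rintro ⟨u, hu, h⟩
    exact ⟨u, hu, dom_le E₁ E₂ hsingle hpair u v h⟩
  · rintro ⟨u, hu, h⟩
    exact ⟨u, hu, dom_le E₂ E₁ (fun i => (hsingle i).symm)
      (fun i j h1 h2 => (hpair i j h1 h2).symm) u v h⟩

/-- The matching pairs. -/
def matchPair (n : ℕ) (k : Fin (n / 2)) : Finset (Fin n) :=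
  {⟨2 * k.val, by have := k.isLt; omega⟩, ⟨2 * k.val + 1, by have := k.isLt; omega⟩}

theorem mem_matchPair {n : ℕ} (k : Fin (n / 2)) (x : Fin n) :
    x ∈ matchPair n k ↔ x.val / 2 = k.val := by
  simp only [matchPair, Finset.mem_insert, Finset.mem_singleton, Fin.ext_iff]
  omega

theorem matchPair_card {n : ℕ} (k : Fin (n / 2)) : (matchPair n k).card = 2 := by
  rw [matchPair, Finset.card_pair]
  simp [Fin.ext_iff]

theorem matchPair_inj (n : ℕ) : Function.Injective (matchPair n) := by
  intro k l h
  have hk : (⟨2 * k.val, by have := k.isLt; omega⟩ : Fin n) ∈ matchPair n k := by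
    rw [mem_matchPair]; simp
  rw [h, mem_matchPair] at hk
  ext
  simpa using hk

theorem exists_words (n : ℕ) : ∃ S : Finset (Finset (Fin n)),
    (∀ A ∈ S, A.Nonempty) ∧ S.card = (n + 1) / 2 + n.choose 2 ∧
    (∀ i : Fin n, {i} ∈ S) ∧
    ∀ i j : Fin n, i ≠ j → i.val / 2 ≠ j.val / 2 → {i, j} ∈ S := by
  classical
  let P1 : Finset (Finset (Fin n)) := Finset.univ.powersetCard 1
  let P2 : Finset (Finset (Fin n)) := Finset.univ.powersetCard 2
  let M : Finset (Finset (Fin n)) := Finset.univ.image (matchPair n)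
  have hM : M ⊆ P2 := by
    intro A hA
    obtain ⟨k, -, rfl⟩ := Finset.mem_image.1 hA
    exact Finset.mem_powersetCard.2 ⟨Finset.subset_univ _, matchPair_card k⟩
  have hMc : M.card = n / 2 := by
    rw [Finset.card_image_of_injective _ (matchPair_inj n)]; simp
  have hP1 : P1.card = n := by simp [P1]
  have hP2 : P2.card = n.choose 2 := by simp [P2]
  have hle := Finset.card_le_card hM
  refine ⟨P1 ∪ (P2 \ M), ?_, ?_, ?_, ?_⟩
  · intro A hA
    rw [← Finset.card_pos]
    rcases Finset.mem_union.1 hA with h | h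
    · rw [(Finset.mem_powersetCard.1 h).2]; norm_num
    · rw [(Finset.mem_powersetCard.1 (Finset.mem_sdiff.1 h).1).2]; norm_num
  · rw [Finset.card_union_of_disjoint, Finset.card_sdiff_of_subset hM]
    · omega
    · rw [Finset.disjoint_left]
      intro A h1 h2
      have e1 := (Finset.mem_powersetCard.1 h1).2
      have e2 := (Finset.mem_powersetCard.1 (Finset.mem_sdiff.1 h2).1).2
      omega
  · intro i
    exact Finset.mem_union_left _ (Finset.mem_powersetCard.2 ⟨Finset.subset_univ _, by simp⟩)
  · intro i j hij hm
    refine Finset.mem_union_right _ (Finset.mem_sdiff.2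
      ⟨Finset.mem_powersetCard.2 ⟨Finset.subset_univ _, Finset.card_pair hij⟩, ?_⟩)
    intro h
    obtain ⟨k, -, hk⟩ := Finset.mem_image.1 h
    have h1 : i ∈ matchPair n k := by rw [hk]; simp
    have h2 : j ∈ matchPair n k := by rw [hk]; simp
    rw [mem_matchPair] at h1 h2
    exact hm (h1.trans h2.symm)

/-- if two directed graphs on `[n]` have closures of the same cardinality on
all singletons, and on all pairs except possibly the `⌊n/2⌋` matching pairs
`{1,2}, {3,4}, {5,6}, …` (for `0`-indexed vertices `i,j : Fin n`, the pair `{i,j}` is a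
matching pair exactly when `i.val / 2 = j.val / 2`), then all their closures have the same
cardinality.  Consequently `D(n) ≤ ⌈n/2⌉ + n(n−1)/2`: there is a set `S` of
`⌈n/2⌉ + C(n,2)` words (given by their supports) whose `G`-weights suffice to reconstruct
any metric based on a directed graph with `n` vertices. -/
theorem stmt_7 {n : ℕ} (hn : 1 ≤ n)
    (E₁ E₂ : Fin n → Fin n → Prop) (hE₁ : Irreflexive E₁) (hE₂ : Irreflexive E₂)
    (hsingle : ∀ i : Fin n, (gclosure E₁ {i}).ncard = (gclosure E₂ {i}).ncard)
    (hpair : ∀ i j : Fin n, i ≠ j → i.val / 2 ≠ j.val / 2 →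
      (gclosure E₁ {i, j}).ncard = (gclosure E₂ {i, j}).ncard) :
    (∀ A : Set (Fin n), (gclosure E₁ A).ncard = (gclosure E₂ A).ncard) ∧
    ∃ S : Finset (Finset (Fin n)),
      (∀ A ∈ S, A.Nonempty) ∧
      S.card = (n + 1) / 2 + n.choose 2 ∧
      ∀ E₁' E₂' : Fin n → Fin n → Prop, Irreflexive E₁' → Irreflexive E₂' →
        (∀ A ∈ S, (gclosure E₁' (A : Set (Fin n))).ncard =
          (gclosure E₂' (A : Set (Fin n))).ncard) →
        ∀ A : Set (Fin n), (gclosure E₁' A).ncard = (gclosure E₂' A).ncard := by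
  refine ⟨closure_card_eq E₁ E₂ hsingle hpair, ?_⟩
  obtain ⟨S, h1, h2, h3, h4⟩ := exists_words n
  refine ⟨S, h1, h2, ?_⟩
  intro E₁' E₂' _ _ h
  refine closure_card_eq E₁' E₂' ?_ ?_
  · intro i
    simpa using h _ (h3 i)
  · intro i j hij hm
    simpa using h _ (h4 i j hij hm)
end

section
/- Let G be a directed graph on [n] whose reduced canonical form determines a hierarchical poset P_G, and fix a level index i. Let C ⊆ F_q^n be a linear code with supp(C) ⊆ V_i (every codeword is supported in the i-th level of G), and let x ∈ F_q^n be a vector such that Max_G(x) ⊆ V_i and whose cleared-out form x̃ does not belong to C. Then the codes C ⊕ span{x} and C ⊕ span{x̃} are G-equivalent. -/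
/-- The `G`-weight of a word `x`. -/
noncomputable def gweight {n : ℕ} {F : Type*} [Field F] (E : Fin n → Fin n → Prop)
    (x : Fin n → F) : ℕ :=
  (gclosure E {i | x i ≠ 0}).ncard

/-- `u` dominates `v`: `v` is reachable from `u` by a directed path. -/
def gdom {n : ℕ} (E : Fin n → Fin n → Prop) : Fin n → Fin n → Prop :=
  Relation.ReflTransGen E

/-- Clique equivalence: `u` and `v` dominate each other. -/
def cliqueSetoid {n : ℕ} (E : Fin n → Fin n → Prop) : Setoid (Fin n) where
  r u v := gdom E u v ∧ gdom E v u
  iseqv := ⟨fun _ => ⟨Relation.ReflTransGen.refl, Relation.ReflTransGen.refl⟩,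
    fun h => ⟨h.2, h.1⟩,
    fun h₁ h₂ => ⟨h₁.1.trans h₂.1, h₂.2.trans h₁.2⟩⟩

/-- The set of classes `V′` of the reduced canonical form of `G`. -/
def Vred {n : ℕ} (E : Fin n → Fin n → Prop) : Type :=
  Quotient (cliqueSetoid E)

/-- The projection `π` from vertices to their classes. -/
def gpi {n : ℕ} (E : Fin n → Fin n → Prop) (v : Fin n) : Vred E :=
  Quotient.mk (cliqueSetoid E) v

/-- The order of the poset `P_G` on the classes: `π(v) ⪯ π(u)` iff `u` dominates `v`. -/
def ple {n : ℕ} (E : Fin n → Fin n → Prop) (a b : Vred E) : Prop :=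
  ∃ u v : Fin n, gpi E v = a ∧ gpi E u = b ∧ gdom E u v

/-- The weight `L(a)` of a class: the number of vertices in it. -/
noncomputable def lwt {n : ℕ} (E : Fin n → Fin n → Prop) (a : Vred E) : ℕ :=
  {v : Fin n | gpi E v = a}.ncard

/-- The height of `a` in `P_G`: the maximum cardinality of a chain of `P_G` having `a`
as its maximal element. -/
noncomputable def hgt {n : ℕ} (E : Fin n → Fin n → Prop) (a : Vred E) : ℕ :=
  sSup {k | ∃ c : Set (Vred E), c.ncard = k ∧ a ∈ c ∧ (∀ x ∈ c, ple E x a) ∧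
    ∀ x ∈ c, ∀ y ∈ c, ple E x y ∨ ple E y x}

/-- `P_G` is hierarchical: every element of height `i > 1` lies strictly above every
element of height `i − 1`. -/
def Hierarchical {n : ℕ} (E : Fin n → Fin n → Prop) : Prop :=
  ∀ a b : Vred E, 1 < hgt E a → hgt E b + 1 = hgt E a → (ple E b a ∧ b ≠ a)

/-- `G` satisfies the Unique Decomposition Property: any two subsets of a level of `P_G`
with the same total `L`-weight are matched by an `L`-preserving bijection. -/
def UDP {n : ℕ} (E : Fin n → Fin n → Prop) : Prop :=
  ∀ (i : ℕ) (S S' : Set (Vred E)),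
    S ⊆ {a | hgt E a = i} → S' ⊆ {a | hgt E a = i} →
    (∑ᶠ a ∈ S, lwt E a) = (∑ᶠ a ∈ S', lwt E a) →
    ∃ g : Vred E → Vred E, Set.BijOn g S S' ∧ ∀ a ∈ S, lwt E (g a) = lwt E a

open Classical in
/-- The set `Max_G(x)`: indices in the support of `x` whose class is maximal in
`π(supp(x))` with respect to `P_G`. -/
def maxSupp {n : ℕ} {F : Type*} [Field F] (E : Fin n → Fin n → Prop)
    (x : Fin n → F) : Set (Fin n) :=
  {j | x j ≠ 0 ∧ ∀ k : Fin n, x k ≠ 0 → ple E (gpi E j) (gpi E k) → gpi E k = gpi E j}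

open Classical in
/-- The cleared-out form `x̃` of `x`: keep the coordinates in `Max_G(x)`, zero elsewhere. -/
noncomputable def cleared {n : ℕ} {F : Type*} [Field F] (E : Fin n → Fin n → Prop)
    (x : Fin n → F) : Fin n → F :=
  fun j => if j ∈ maxSupp E x then x j else 0

instance vred_finite {n : ℕ} (E : Fin n → Fin n → Prop) : Finite (Vred E) :=
  Quotient.finite _

theorem ple_mk {n : ℕ} (E : Fin n → Fin n → Prop) (u v : Fin n) :
    ple E (gpi E v) (gpi E u) ↔ gdom E u v := by
  constructor
  · rintro ⟨u', v', hv, hu, h⟩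
    have h1 := Quotient.exact hv
    have h2 := Quotient.exact hu
    exact Relation.ReflTransGen.trans h2.2 (Relation.ReflTransGen.trans h h1.1)
  · intro h
    exact ⟨u, v, rfl, rfl, h⟩

theorem gpi_surj {n : ℕ} (E : Fin n → Fin n → Prop) (a : Vred E) : ∃ v, gpi E v = a :=
  Quotient.exists_rep a

theorem ple_refl' {n : ℕ} (E : Fin n → Fin n → Prop) (a : Vred E) : ple E a a := by
  obtain ⟨v, rfl⟩ := gpi_surj E a
  exact (ple_mk E v v).2 Relation.ReflTransGen.refl

theorem ple_trans' {n : ℕ} (E : Fin n → Fin n → Prop) {a b c : Vred E}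
    (h1 : ple E a b) (h2 : ple E b c) : ple E a c := by
  obtain ⟨u, rfl⟩ := gpi_surj E a
  obtain ⟨v, rfl⟩ := gpi_surj E b
  obtain ⟨w, rfl⟩ := gpi_surj E c
  rw [ple_mk] at *
  exact Relation.ReflTransGen.trans h2 h1

theorem ple_antisymm' {n : ℕ} (E : Fin n → Fin n → Prop) {a b : Vred E}
    (h1 : ple E a b) (h2 : ple E b a) : a = b := by
  obtain ⟨u, rfl⟩ := gpi_surj E a
  obtain ⟨v, rfl⟩ := gpi_surj E b
  rw [ple_mk] at *
  exact Quotient.sound ⟨h2, h1⟩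

theorem hgt_bdd {n : ℕ} (E : Fin n → Fin n → Prop) (a : Vred E) :
    BddAbove {k | ∃ c : Set (Vred E), c.ncard = k ∧ a ∈ c ∧ (∀ x ∈ c, ple E x a) ∧
    ∀ x ∈ c, ∀ y ∈ c, ple E x y ∨ ple E y x} := by
  refine ⟨Nat.card (Vred E), ?_⟩
  rintro k ⟨c, rfl, -⟩
  exact Set.ncard_le_card c

theorem hgt_attained {n : ℕ} (E : Fin n → Fin n → Prop) (a : Vred E) :
    ∃ c : Set (Vred E), c.ncard = hgt E a ∧ a ∈ c ∧ (∀ x ∈ c, ple E x a) ∧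
    ∀ x ∈ c, ∀ y ∈ c, ple E x y ∨ ple E y x := by
  have := Nat.sSup_mem (s := {k | ∃ c : Set (Vred E), c.ncard = k ∧ a ∈ c ∧
    (∀ x ∈ c, ple E x a) ∧ ∀ x ∈ c, ∀ y ∈ c, ple E x y ∨ ple E y x}) ?_ (hgt_bdd E a)
  · exact this
  · refine ⟨_, {a}, rfl, rfl, ?_, ?_⟩
    · rintro x rfl
      exact ple_refl' E _
    · rintro x rfl y rfl
      exact Or.inl (ple_refl' E _)

theorem le_hgt {n : ℕ} (E : Fin n → Fin n → Prop) (a : Vred E) (c : Set (Vred E))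
    (h1 : a ∈ c) (h2 : ∀ x ∈ c, ple E x a)
    (h3 : ∀ x ∈ c, ∀ y ∈ c, ple E x y ∨ ple E y x) : c.ncard ≤ hgt E a :=
  le_csSup (hgt_bdd E a) ⟨c, rfl, h1, h2, h3⟩

theorem hgt_lt {n : ℕ} (E : Fin n → Fin n → Prop) {a b : Vred E}
    (h : ple E a b) (hne : a ≠ b) : hgt E a < hgt E b := by
  obtain ⟨c, hc, -, hle, hch⟩ := hgt_attained E a
  have hb : b ∉ c := fun hb => hne (ple_antisymm' E h (hle b hb))
  have h1 := le_hgt E b (insert b c) (Set.mem_insert _ _) ?_ ?_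
  · rw [Set.ncard_insert_of_notMem hb (Set.toFinite c)] at h1
    omega
  · rintro x (rfl | hx)
    · exact ple_refl' E _
    · exact ple_trans' E (hle x hx) h
  · rintro x (rfl | hx) y (rfl | hy)
    · exact Or.inl (ple_refl' E _)
    · exact Or.inr (ple_trans' E (hle y hy) h)
    · exact Or.inl (ple_trans' E (hle x hx) h)
    · exact hch x hx y hy

theorem hgt_pos {n : ℕ} (E : Fin n → Fin n → Prop) (a : Vred E) : 0 < hgt E a := by
  obtain ⟨c, hc, ha, -, -⟩ := hgt_attained E a
  rw [← hc, Set.ncard_pos (Set.toFinite c)]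
  exact ⟨a, ha⟩

theorem exists_pred {n : ℕ} (E : Fin n → Fin n → Prop) (a : Vred E) (h : 1 < hgt E a) :
    ∃ d, ple E d a ∧ hgt E d + 1 = hgt E a := by
  obtain ⟨c, hc, ha, hle, hch⟩ := hgt_attained E a
  have hcard : (c \ {a}).ncard + 1 = hgt E a := by
    rw [← hc]
    exact Set.ncard_diff_singleton_add_one ha (Set.toFinite c)
  have hne : (c \ {a}).Nonempty := by
    rw [← Set.ncard_pos (Set.toFinite _)]
    omega
  obtain ⟨d, hd, hdmax⟩ := Set.exists_max_image (c \ {a}) (hgt E) (Set.toFinite _) hne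
  have hlt : hgt E d < hgt E a := hgt_lt E (hle d hd.1) hd.2
  have hge := le_hgt E d (c \ {a}) hd ?_ (fun x hx y hy => hch x hx.1 y hy.1)
  · exact ⟨d, hle d hd.1, by omega⟩
  · intro y hy
    rcases hch y hy.1 d hd.1 with h' | h'
    · exact h'
    · by_cases hyd : d = y
      · subst hyd
        exact h'
      · have := hgt_lt E h' hyd
        have := hdmax y hy
        omega

theorem hier_ple {n : ℕ} (E : Fin n → Fin n → Prop) (hh : Hierarchical E) :
    ∀ (m : ℕ) (a b : Vred E), hgt E a = m → hgt E b < m → ple E b a := by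
  intro m
  induction m with
  | zero => intro a b _ h; omega
  | succ m ih =>
    intro a b ha hb
    have hp := hgt_pos E b
    by_cases hbm : hgt E b = m
    · exact (hh a b (by omega) (by omega)).1
    · obtain ⟨d, hd, hd'⟩ := exists_pred E a (by omega)
      exact ple_trans' E (ih d b (by omega) (by omega)) hd

theorem gclosure_sub {n : ℕ} (E : Fin n → Fin n → Prop) (X Y : Set (Fin n))
    (h : ∀ u ∈ X, ∃ w ∈ Y, gdom E w u) : gclosure E X ⊆ gclosure E Y := by
  rintro v ⟨u, hu, huv⟩
  obtain ⟨w, hw, hwu⟩ := h u hu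
  exact ⟨w, hw, Relation.ReflTransGen.trans hwu huv⟩

theorem closure_pert {n : ℕ} {F : Type*} [Field F] (E : Fin n → Fin n → Prop)
    (hh : Hierarchical E) (i : ℕ) (z z' : Fin n → F)
    (hz : ∀ j, z j ≠ z' j → hgt E (gpi E j) < i)
    (hk : ∃ k, z k ≠ 0 ∧ hgt E (gpi E k) = i) :
    gclosure E {j | z' j ≠ 0} ⊆ gclosure E {j | z j ≠ 0} := by
  obtain ⟨k, hk, hki⟩ := hk
  apply gclosure_sub
  intro u hu
  by_cases h : z u = z' u
  · refine ⟨u, ?_, Relation.ReflTransGen.refl⟩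
    change z u ≠ 0
    rw [h]
    exact hu
  · exact ⟨k, hk, (ple_mk E k u).1 (hier_ple E hh i _ _ hki (hz u h))⟩

theorem non_max_lt {n : ℕ} {F : Type*} [Field F] (E : Fin n → Fin n → Prop)
    (i : ℕ) (x : Fin n → F)
    (hmax : ∀ j ∈ maxSupp E x, hgt E (gpi E j) = i)
    (j : Fin n) (hj : x j ≠ 0) (hjm : j ∉ maxSupp E x) : hgt E (gpi E j) < i := by
  let S : Set (Fin n) := {k | x k ≠ 0 ∧ ple E (gpi E j) (gpi E k) ∧ gpi E k ≠ gpi E j}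
  have hne : S.Nonempty := by
    by_contra hS
    apply hjm
    refine ⟨hj, fun k hk hle => ?_⟩
    by_contra hne
    exact hS ⟨k, hk, hle, hne⟩
  obtain ⟨k, hk, hkmax⟩ := Set.exists_max_image S (fun k => hgt E (gpi E k)) (Set.toFinite _) hne
  have hkm : k ∈ maxSupp E x := by
    refine ⟨hk.1, fun l hl hkl => ?_⟩
    by_contra hne'
    have h1 := hgt_lt E hkl (Ne.symm hne')
    have h2 := hgt_lt E hk.2.1 (Ne.symm hk.2.2)
    have h3 := hkmax l ⟨hl, ple_trans' E hk.2.1 hkl, fun h => by rw [h] at h1; omega⟩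
    omega
  rw [← hmax k hkm]
  exact hgt_lt E hk.2.1 (Ne.symm hk.2.2)

/-- for a hierarchical graph, a level `i`, a linear code `C` supported in the
`i`-th level `V_i` of `G`, and a vector `x` with `Max_G(x) ⊆ V_i` whose cleared-out form
`x̃` is not in `C`, the codes `C ⊕ span{x}` and `C ⊕ span{x̃}` are `G`-equivalent. -/
theorem stmt_16 {n : ℕ} (hn : 1 ≤ n) {F : Type*} [Field F] [Fintype F]
    (E : Fin n → Fin n → Prop) (hE : Irreflexive E) (hh : Hierarchical E)
    (i : ℕ) (C : Submodule F (Fin n → F))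
    (hC : ∀ c ∈ C, ∀ j : Fin n, c j ≠ 0 → hgt E (gpi E j) = i)
    (x : Fin n → F)
    (hmax : ∀ j ∈ maxSupp E x, hgt E (gpi E j) = i)
    (hxt : cleared E x ∉ C) :
    ∃ T : (Fin n → F) →ₗ[F] (Fin n → F),
      Function.Bijective T ∧ (∀ z : Fin n → F, gweight E (T z) = gweight E z) ∧
      Submodule.map T (C ⊔ Submodule.span F {x}) =
        C ⊔ Submodule.span F {cleared E x} := by
  classical
  obtain ⟨f, hf, hfC⟩ := Submodule.exists_le_ker_of_notMem hxt
  let P : (Fin n → F) →ₗ[F] (Fin n → F) :=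
    { toFun := fun z j => if hgt E (gpi E j) = i then z j else 0
      map_add' := by intro a b; ext j; by_cases h : hgt E (gpi E j) = i <;> simp [h]
      map_smul' := by intro a b; ext j; by_cases h : hgt E (gpi E j) = i <;> simp [h] }
  have hP : ∀ z j, P z j = if hgt E (gpi E j) = i then z j else 0 := fun _ _ => rfl
  set t := cleared E x with ht
  have htj : ∀ j, t j = if j ∈ maxSupp E x then x j else 0 := fun _ => rfl
  let y : Fin n → F := x - t
  have hyx : ∀ j, y j ≠ 0 → hgt E (gpi E j) < i := by
    intro j hj
    have hj' : x j - t j ≠ 0 := hj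
    rw [htj] at hj'
    by_cases hm : j ∈ maxSupp E x
    · simp [hm] at hj'
    · simp only [hm, if_false, sub_zero] at hj'
      exact non_max_lt E i x hmax j hj' hm
  have hPt : P t = t := by
    ext j
    rw [hP]
    split_ifs with h
    · rfl
    · rw [htj, if_neg (fun hm => h (hmax j hm))]
  have hPC : ∀ c ∈ C, P c = c := by
    intro c hc
    ext j
    rw [hP]
    split_ifs with h
    · rfl
    · by_contra h0
      exact h (hC c hc j (Ne.symm h0))
  have hPy : P y = 0 := by
    ext j
    rw [hP]
    split_ifs with h
    · by_contra h0
      have := hyx j h0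
      omega
    · rfl
  let φ : (Fin n → F) →ₗ[F] F := (f t)⁻¹ • (f ∘ₗ P)
  have hφ : ∀ z, φ z = (f t)⁻¹ * f (P z) := fun _ => rfl
  have hφt : φ t = 1 := by rw [hφ, hPt, inv_mul_cancel₀ hf]
  have hφy : φ y = 0 := by rw [hφ, hPy]; simp
  have hφC : ∀ c ∈ C, φ c = 0 := by
    intro c hc
    rw [hφ, hPC c hc, LinearMap.mem_ker.1 (hfC hc), mul_zero]
  have hφs : ∀ z, φ z ≠ 0 → ∃ k, z k ≠ 0 ∧ hgt E (gpi E k) = i := by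
    intro z hz
    by_contra hcon
    push Not at hcon
    apply hz
    have : P z = 0 := by
      ext j
      rw [hP]
      split_ifs with h
      · by_contra h0
        exact hcon j h0 h
      · rfl
    rw [hφ, this]; simp
  have hxy : x = t + y := by simp [y]
  let T : (Fin n → F) →ₗ[F] (Fin n → F) := LinearMap.id - φ.smulRight y
  have hT : ∀ z, T z = z - φ z • y := fun _ => rfl
  have hφT : ∀ z, φ (T z) = φ z := by
    intro z
    rw [hT, map_sub, map_smul, hφy]; simp
  have hTx : T x = t := by
    rw [hT, hxy, map_add, hφt, hφy]; simp
  have hTC : ∀ c ∈ C, T c = c := by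
    intro c hc
    rw [hT, hφC c hc]; simp
  have hdiff : ∀ z j, z j ≠ T z j → hgt E (gpi E j) < i := by
    intro z j hj
    apply hyx
    intro h0
    apply hj
    rw [hT]
    simp [h0]
  refine ⟨T, ⟨?_, ?_⟩, ?_, ?_⟩
  · intro a b hab
    have h1 : φ a = φ b := by rw [← hφT a, ← hφT b, hab]
    rw [hT, hT, h1] at hab
    exact sub_left_injective hab
  · intro b
    refine ⟨b + φ b • y, ?_⟩
    rw [hT, map_add, map_smul, hφy]
    simp
  · intro z
    by_cases hz : φ z = 0
    · rw [hT, hz]; simp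
    · unfold gweight
      congr 1
      apply Set.Subset.antisymm
      · exact closure_pert E hh i z (T z) (hdiff z) (hφs z hz)
      · exact closure_pert E hh i (T z) z (fun j hj => hdiff z j (Ne.symm hj))
          (hφs (T z) (by rw [hφT]; exact hz))
  · rw [Submodule.map_sup, Submodule.map_span, Set.image_singleton, hTx]
    congr 1
    ext c
    constructor
    · rintro ⟨d, hd, rfl⟩
      rw [hTC d hd]
      exact hd
    · intro hc
      exact ⟨c, hc, hTC c hc⟩
end
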